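/- arXiv:1907.02219 — 2 statements merged into one kernel-verified Lean document; each statement's English description precedes it below -/
import Mathlib

section
/- For every f ∈ Ω_f there exists a subset D ⊆ Ω_ξ, dense in Ω_ξ, such that for every ξ ∈ D the set Ω_sl(ξ) \ ~Ω_sl(ξ, f) is contained in a finite union of affine subspaces of ℝ^{N_L} each of dimension strictly less than N_L. -/
open Matrix

noncomputable section

/-- Parameter tuple ξ = (s̄, s̲, p̄, p̲). -/
abbrev XiT (NG E : ℕ) : Type := (Fin NG → ℝ) × (Fin NG → ℝ) × (Fin E → ℝ) × (Fin E → ℝ)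

/-- Each column of `C` has exactly one `+1`, one `-1`, and zeros elsewhere. -/
def IsIncidence {NG NL E : ℕ} (C : Matrix (Fin (NG + NL)) (Fin E) ℝ) : Prop :=
  ∀ e : Fin E, ∃ u v : Fin (NG + NL), u ≠ v ∧ C u e = 1 ∧ C v e = -1 ∧
    ∀ w : Fin (NG + NL), w ≠ u → w ≠ v → C w e = 0

/-- Connectedness: the kernel of `Cᵀ` consists exactly of the constant vectors. -/
def ConnectedIncidence {NG NL E : ℕ} (C : Matrix (Fin (NG + NL)) (Fin E) ℝ) : Prop :=
  ∀ x : Fin (NG + NL) → ℝ, Cᵀ *ᵥ x = 0 ↔ ∃ c : ℝ, x = fun _ => c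

/-- `B` is diagonal with strictly positive diagonal entries. -/
def PosDiag {E : ℕ} (B : Matrix (Fin E) (Fin E) ℝ) : Prop :=
  (∀ e, 0 < B e e) ∧ ∀ e e' : Fin E, e ≠ e' → B e e' = 0

/-- Feasibility of `(s^g, θ)` for the DC-OPF with limits `ξ` and loads `sl`. -/
def Feasible {NG NL E : ℕ} (C : Matrix (Fin (NG + NL)) (Fin E) ℝ)
    (B : Matrix (Fin E) (Fin E) ℝ) (ξ : XiT NG E) (sl : Fin NL → ℝ)
    (sg : Fin NG → ℝ) (θ : Fin (NG + NL) → ℝ) : Prop :=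
  (∀ h : 0 < NG + NL, θ ⟨0, h⟩ = 0) ∧
  (C * B * Cᵀ) *ᵥ θ = Fin.append sg (fun j => -(sl j)) ∧
  (∀ i, ξ.2.1 i ≤ sg i ∧ sg i ≤ ξ.1 i) ∧
  (∀ e, ξ.2.2.2 e ≤ ((B * Cᵀ) *ᵥ θ) e ∧ ((B * Cᵀ) *ᵥ θ) e ≤ ξ.2.2.1 e)

/-- The set Ω_ξ of admissible system limits. -/
def OmegaXi {NG NL E : ℕ} (C : Matrix (Fin (NG + NL)) (Fin E) ℝ)
    (B : Matrix (Fin E) (Fin E) ℝ) : Set (XiT NG E) :=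
  { ξ | (∀ i, 0 ≤ ξ.2.1 i) ∧ (∀ i, ξ.2.1 i < ξ.1 i) ∧ (∀ e, ξ.2.2.2 e < ξ.2.2.1 e) ∧
    ∃ sl : Fin NL → ℝ, (∀ j, 0 < sl j) ∧ ∃ sg θ, Feasible C B ξ sl sg θ }

/-- The set Ω_sl(ξ) of strictly positive feasible load profiles. -/
def OmegaSl {NG NL E : ℕ} (C : Matrix (Fin (NG + NL)) (Fin E) ℝ)
    (B : Matrix (Fin E) (Fin E) ℝ) (ξ : XiT NG E) : Set (Fin NL → ℝ) :=
  { sl | (∀ j, 0 < sl j) ∧ ∃ sg θ, Feasible C B ξ sl sg θ }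

/-- `(sg, θ)` is an optimal solution of the DC-OPF. -/
def IsOptimal {NG NL E : ℕ} (C : Matrix (Fin (NG + NL)) (Fin E) ℝ)
    (B : Matrix (Fin E) (Fin E) ℝ) (f : Fin NG → ℝ) (ξ : XiT NG E)
    (sl : Fin NL → ℝ) (sg : Fin NG → ℝ) (θ : Fin (NG + NL) → ℝ) : Prop :=
  Feasible C B ξ sl sg θ ∧
  ∀ sg' θ', Feasible C B ξ sl sg' θ' → f ⬝ᵥ sg ≤ f ⬝ᵥ sg'

/-- The matrix M: first N rows are C B Cᵀ, last row is e₁ᵀ. -/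
def Mmat {NG NL E : ℕ} (C : Matrix (Fin (NG + NL)) (Fin E) ℝ)
    (B : Matrix (Fin E) (Fin E) ℝ) : Matrix (Fin (NG + NL + 1)) (Fin (NG + NL)) ℝ :=
  Matrix.of fun i j => if h : (i : ℕ) < NG + NL then (C * B * Cᵀ) ⟨(i : ℕ), h⟩ j
    else if (j : ℕ) = 0 then 1 else 0

/-- KKT point for the DC-OPF. -/
def IsKKT {NG NL E : ℕ} (C : Matrix (Fin (NG + NL)) (Fin E) ℝ)
    (B : Matrix (Fin E) (Fin E) ℝ) (f : Fin NG → ℝ) (ξ : XiT NG E)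
    (sl : Fin NL → ℝ) (sg : Fin NG → ℝ) (θ : Fin (NG + NL) → ℝ)
    (τ : Fin (NG + NL + 1) → ℝ) (μp μm : Fin E → ℝ) (lp lm : Fin NG → ℝ) : Prop :=
  Feasible C B ξ sl sg θ ∧
  (Mmat C B)ᵀ *ᵥ τ + (C * B) *ᵥ (μp - μm) = 0 ∧
  (∀ i : Fin NG, -f i = -τ (Fin.castLE (by omega) i) + lp i - lm i) ∧
  (∀ e, 0 ≤ μp e) ∧ (∀ e, 0 ≤ μm e) ∧ (∀ i, 0 ≤ lp i) ∧ (∀ i, 0 ≤ lm i) ∧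
  μp ⬝ᵥ (((B * Cᵀ) *ᵥ θ) - ξ.2.2.1) = 0 ∧
  μm ⬝ᵥ (ξ.2.2.2 - ((B * Cᵀ) *ᵥ θ)) = 0 ∧
  lp ⬝ᵥ (sg - ξ.1) = 0 ∧
  lm ⬝ᵥ (ξ.2.1 - sg) = 0

/-- ℓ₀ "norm": number of nonzero entries. -/
def nnz {n : ℕ} (v : Fin n → ℝ) : ℕ := Set.ncard { i | v i ≠ 0 }

/-- The set Ω_f of well-behaved cost vectors. -/
def OmegaF {NG NL E : ℕ} (C : Matrix (Fin (NG + NL)) (Fin E) ℝ)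
    (B : Matrix (Fin E) (Fin E) ℝ) : Set (Fin NG → ℝ) :=
  { f | (∀ i, 0 ≤ f i) ∧
    ∀ ξ ∈ OmegaXi C B, ∀ sl ∈ OmegaSl C B ξ,
      (∃! p : (Fin NG → ℝ) × (Fin (NG + NL) → ℝ), IsOptimal C B f ξ sl p.1 p.2) ∧
      ∀ sg θ τ μp μm lp lm, IsKKT C B f ξ sl sg θ τ μp μm lp lm →
        NG - 1 ≤ nnz μp + nnz μm + nnz lp + nnz lm }

/-- Number of binding inequality constraints at `(sg, θ)` (among the 2N_G + 2E). -/
def bindingCount {NG NL E : ℕ} (C : Matrix (Fin (NG + NL)) (Fin E) ℝ)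
    (B : Matrix (Fin E) (Fin E) ℝ) (ξ : XiT NG E) (sg : Fin NG → ℝ)
    (θ : Fin (NG + NL) → ℝ) : ℕ :=
  Set.ncard { i : Fin NG | sg i = ξ.1 i } + Set.ncard { i : Fin NG | sg i = ξ.2.1 i } +
  Set.ncard { e : Fin E | ((B * Cᵀ) *ᵥ θ) e = ξ.2.2.1 e } +
  Set.ncard { e : Fin E | ((B * Cᵀ) *ᵥ θ) e = ξ.2.2.2 e }

/-- ~Ω_sl(ξ, f): loads with exactly N_G − 1 binding constraints at the optimum. -/
def TOmegaSl {NG NL E : ℕ} (C : Matrix (Fin (NG + NL)) (Fin E) ℝ)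
    (B : Matrix (Fin E) (Fin E) ℝ) (f : Fin NG → ℝ) (ξ : XiT NG E) :
    Set (Fin NL → ℝ) :=
  { sl | sl ∈ OmegaSl C B ξ ∧
    ∀ sg θ, IsOptimal C B f ξ sl sg θ → bindingCount C B ξ sg θ = NG - 1 }

/-- Indices of binding inequality constraints:
`inl i` = upper generation, `inr (inl i)` = lower generation,
`inr (inr (inl e))` = upper flow, `inr (inr (inr e))` = lower flow. -/
def BindingIdx {NG NL E : ℕ} (C : Matrix (Fin (NG + NL)) (Fin E) ℝ)
    (B : Matrix (Fin E) (Fin E) ℝ) (ξ : XiT NG E) (sg : Fin NG → ℝ)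
    (θ : Fin (NG + NL) → ℝ) : Set (Fin NG ⊕ Fin NG ⊕ Fin E ⊕ Fin E) :=
  { c | match c with
    | Sum.inl i => sg i = ξ.1 i
    | Sum.inr (Sum.inl i) => sg i = ξ.2.1 i
    | Sum.inr (Sum.inr (Sum.inl e)) => ((B * Cᵀ) *ᵥ θ) e = ξ.2.2.1 e
    | Sum.inr (Sum.inr (Sum.inr e)) => ((B * Cᵀ) *ᵥ θ) e = ξ.2.2.2 e }

/-- Gradients of the N + 1 equality constraints, as vectors in ℝ^{N_G} × ℝ^{N}. -/
def eqGrad {NG NL E : ℕ} (C : Matrix (Fin (NG + NL)) (Fin E) ℝ)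
    (B : Matrix (Fin E) (Fin E) ℝ) :
    (Unit ⊕ Fin (NG + NL)) → (Fin NG → ℝ) × (Fin (NG + NL) → ℝ)
  | Sum.inl _ => (0, fun j => if (j : ℕ) = 0 then 1 else 0)
  | Sum.inr i => ((fun k : Fin NG => if (k : ℕ) = (i : ℕ) then -1 else 0),
      fun j => (C * B * Cᵀ) i j)

/-- Gradients of the inequality constraints. -/
def ineqGrad {NG NL E : ℕ} (C : Matrix (Fin (NG + NL)) (Fin E) ℝ)
    (B : Matrix (Fin E) (Fin E) ℝ) :
    (Fin NG ⊕ Fin NG ⊕ Fin E ⊕ Fin E) → (Fin NG → ℝ) × (Fin (NG + NL) → ℝ)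
  | Sum.inl i => (Pi.single i 1, 0)
  | Sum.inr (Sum.inl i) => (-Pi.single i 1, 0)
  | Sum.inr (Sum.inr (Sum.inl e)) => (0, fun j => (B * Cᵀ) e j)
  | Sum.inr (Sum.inr (Sum.inr e)) => (0, fun j => -(B * Cᵀ) e j)

/-- The family of gradients of all equality constraints together with the binding
inequality constraints at `(sg, θ)`. -/
def fullGrad {NG NL E : ℕ} (C : Matrix (Fin (NG + NL)) (Fin E) ℝ)
    (B : Matrix (Fin E) (Fin E) ℝ) (ξ : XiT NG E) (sg : Fin NG → ℝ)
    (θ : Fin (NG + NL) → ℝ) :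
    ((Unit ⊕ Fin (NG + NL)) ⊕ ↥(BindingIdx C B ξ sg θ)) →
      (Fin NG → ℝ) × (Fin (NG + NL) → ℝ) :=
  fun i => match i with
    | Sum.inl j => eqGrad C B j
    | Sum.inr c => ineqGrad C B c.1

/-- S_G ⊥ S_B : the equality-constraint gradients together with the gradients
`(e_i, 0)`, `i ∈ S_G`, and `(0, row e of B Cᵀ)`, `e ∈ S_B`, are linearly independent. -/
def Perp {NG NL E : ℕ} (C : Matrix (Fin (NG + NL)) (Fin E) ℝ)
    (B : Matrix (Fin E) (Fin E) ℝ) (SG : Finset (Fin NG)) (SB : Finset (Fin E)) : Prop :=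
  LinearIndependent ℝ (fun i : (Unit ⊕ Fin (NG + NL)) ⊕ (↥SG ⊕ ↥SB) =>
    match i with
    | Sum.inl j => eqGrad C B j
    | Sum.inr (Sum.inl g) => ((Pi.single (g : Fin NG) 1 : Fin NG → ℝ), (0 : Fin (NG + NL) → ℝ))
    | Sum.inr (Sum.inr e) => ((0 : Fin NG → ℝ), fun j => (B * Cᵀ) (e : Fin E) j))

/-- The OPF operator: the generation part of the (unique) optimal solution. -/
def OPFmap {NG NL E : ℕ} (C : Matrix (Fin (NG + NL)) (Fin E) ℝ)
    (B : Matrix (Fin E) (Fin E) ℝ) (f : Fin NG → ℝ) (ξ : XiT NG E)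
    (sl : Fin NL → ℝ) : Fin NG → ℝ := by
  classical
  exact if h : ∃ p : (Fin NG → ℝ) × (Fin (NG + NL) → ℝ), IsOptimal C B f ξ sl p.1 p.2
    then h.choose.1 else 0

/-- The matrix R(S_G, S_B)ᵀ: rows N_G+1,…,N of C B Cᵀ; the rows of C B Cᵀ indexed
by S_G; the rows of B Cᵀ indexed by S_B; and e₁ᵀ. -/
def Rmat {NG NL E : ℕ} (C : Matrix (Fin (NG + NL)) (Fin E) ℝ)
    (B : Matrix (Fin E) (Fin E) ℝ) (SG : Finset (Fin NG)) (SB : Finset (Fin E)) :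
    Matrix ((Fin NL ⊕ (↥SG ⊕ ↥SB)) ⊕ Unit) (Fin (NG + NL)) ℝ :=
  Matrix.of fun i j => match i with
    | Sum.inl (Sum.inl k) => (C * B * Cᵀ) (Fin.natAdd NG k) j
    | Sum.inl (Sum.inr (Sum.inl g)) => (C * B * Cᵀ) (Fin.castAdd NL (g : Fin NG)) j
    | Sum.inl (Sum.inr (Sum.inr e)) => (B * Cᵀ) (e : Fin E) j
    | Sum.inr _ => if (j : ℕ) = 0 then 1 else 0

/-- The matrix Π applied to a load vector: embeds ℝ^{N_L} in the row-index space. -/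
def padSl {NG NL E : ℕ} (SG : Finset (Fin NG)) (SB : Finset (Fin E))
    (v : Fin NL → ℝ) : (Fin NL ⊕ (↥SG ⊕ ↥SB)) ⊕ Unit → ℝ
  | Sum.inl (Sum.inl k) => v k
  | _ => 0

/-- J(S_G, S_B) as a map: v ↦ −G (R(S_G,S_B)ᵀ)⁻¹ Π v, where G consists of the
first N_G rows of C B Cᵀ. -/
def JFun {NG NL E : ℕ} (C : Matrix (Fin (NG + NL)) (Fin E) ℝ)
    (B : Matrix (Fin E) (Fin E) ℝ) (SG : Finset (Fin NG)) (SB : Finset (Fin E))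
    (v : Fin NL → ℝ) : Fin NG → ℝ :=
  fun i =>
    -(((C * B * Cᵀ) *ᵥ (Function.invFun (Rmat C B SG SB).mulVec (padSl SG SB v)))
      (Fin.castAdd NL i))

/-- J(S_G, S_B) as an N_G × N_L matrix. -/
def Jmatrix {NG NL E : ℕ} (C : Matrix (Fin (NG + NL)) (Fin E) ℝ)
    (B : Matrix (Fin E) (Fin E) ℝ) (SG : Finset (Fin NG)) (SB : Finset (Fin E)) :
    Matrix (Fin NG) (Fin NL) ℝ :=
  Matrix.of fun i j => JFun C B SG SB (Pi.single j 1) i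

/-!
Eliminating `s^g`, a feasible point is a vector `θ` of angles with `θ₁ = 0`, ranging over a space of
dimension `N - 1`, subject to the `N_L` load equations `ℓ θ = s^l` and inequalities `r θ ≤ b(ξ)`.

* If the optimum is unique, no direction is annihilated by `ℓ` and by all binding rows of `r`, so at
  least `N - 1 - N_L = N_G - 1` constraints bind.
* If a set `S` of at least `N_G` constraints binds, then `θ` lies in the fibre of `r_S` over the
  limits `b_S`. As `N - 1 < N_L + |S|`, either `r_S` is not onto, and for generic limits this fibre
  is empty, or `ℓ (ker r_S)` is a proper subspace, and the fibre has its loads in a translate of it.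
  The finitely many `S` give the exceptional affine subspaces.

The set `Ω_ξ` is convex with nonempty interior, hence contained in the closure of its interior, and
the generic limits in the interior form the dense set `D`.
-/

open Module (finrank)
open Filter Topology

section FibreDimension

variable {K V W U : Type*} [Field K] [AddCommGroup V] [Module K V] [AddCommGroup W] [Module K W]
  [AddCommGroup U] [Module K U] (ℓ : V →ₗ[K] W) (r : V →ₗ[K] U)

lemma range_ne_top_of_map_ker_eq_top [FiniteDimensional K V]
    (hdim : finrank K V < finrank K W + finrank K U) (hℓ : (LinearMap.ker r).map ℓ = ⊤) :
    LinearMap.range r ≠ ⊤ := by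
  intro hr
  have hW : finrank K W ≤ finrank K (LinearMap.ker r) := by
    rw [← finrank_top K W, ← hℓ]
    exact Submodule.finrank_map_le ℓ _
  have hU : finrank K (LinearMap.range r) = finrank K U := by rw [hr, finrank_top]
  have := r.finrank_range_add_finrank_ker
  omega

lemma exists_affineSubspace_of_map_ker_ne_top [Nontrivial W] (hℓ : (LinearMap.ker r).map ℓ ≠ ⊤)
    (b : U) : ∃ P : AffineSubspace K W, P.direction ≠ ⊤ ∧ ∀ x, r x = b → ℓ x ∈ P := by
  by_cases hb : ∃ x₀, r x₀ = b
  · obtain ⟨x₀, rfl⟩ := hb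
    refine ⟨AffineSubspace.mk' (ℓ x₀) ((LinearMap.ker r).map ℓ), ?_, fun x hx => ?_⟩
    · rwa [AffineSubspace.direction_mk']
    · rw [AffineSubspace.mem_mk', vsub_eq_sub, ← map_sub]
      exact Submodule.mem_map_of_mem (LinearMap.sub_mem_ker_iff.2 hx)
  · exact ⟨⊥, by simp, fun x hx => (hb ⟨x, hx⟩).elim⟩

end FibreDimension

section GenericFibre

lemma dense_compl_of_ne_top {U : Type*} [AddCommGroup U] [Module ℝ U] [TopologicalSpace U]
    [ContinuousAdd U] [ContinuousSMul ℝ U] {R : Submodule ℝ U} (hR : R ≠ ⊤) :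
    Dense (R : Set U)ᶜ := by
  rw [← interior_eq_empty_iff_dense_compl, ← Set.not_nonempty_iff_eq_empty]
  exact fun h => hR (R.eq_top_of_nonempty_interior' h)

variable {V W U J : Type*} [AddCommGroup V] [Module ℝ V] [FiniteDimensional ℝ V]
  [AddCommGroup W] [Module ℝ W] [Nontrivial W] (ℓ : V →ₗ[ℝ] W)

lemma exists_isOpen_dense_fibre_image_subset [AddCommGroup U] [Module ℝ U]
    [TopologicalSpace U] [IsTopologicalAddGroup U] [ContinuousSMul ℝ U] [T2Space U]
    [FiniteDimensional ℝ U] (r : V →ₗ[ℝ] U)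
    (hdim : finrank ℝ V < finrank ℝ W + finrank ℝ U) :
    ∃ G : Set U, IsOpen G ∧ Dense G ∧ ∀ b ∈ G, ∃ P : AffineSubspace ℝ W,
      P.direction ≠ ⊤ ∧ ∀ x, r x = b → ℓ x ∈ P := by
  by_cases hℓ : (LinearMap.ker r).map ℓ = ⊤
  · have hr := range_ne_top_of_map_ker_eq_top ℓ r hdim hℓ
    refine ⟨(LinearMap.range r : Set U)ᶜ, ?_, dense_compl_of_ne_top hr, fun b hb => ?_⟩
    · exact (Submodule.closed_of_finiteDimensional _).isOpen_compl
    · exact ⟨⊥, by simp, fun x hx => (hb ⟨x, hx⟩).elim⟩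
  · exact ⟨Set.univ, isOpen_univ, dense_univ,
      fun b _ => exists_affineSubspace_of_map_ker_ne_top ℓ r hℓ b⟩

variable [Finite J]

lemma finrank_set_fun_eq_ncard (S : Set J) : finrank ℝ (S → ℝ) = S.ncard := by
  have := Fintype.ofFinite S
  rw [Module.finrank_fintype_fun_eq_card, ← Nat.card_eq_fintype_card, Nat.card_coe_set_eq]

lemma exists_dense_forall_subset_mem_affineSubspace (r : V →ₗ[ℝ] J → ℝ) :
    ∃ G : Set (J → ℝ), Dense G ∧ ∀ b ∈ G, ∃ (k : ℕ) (P : Fin k → AffineSubspace ℝ W),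
      (∀ m, (P m).direction ≠ ⊤) ∧
      ∀ (S : Set J) (x : V), finrank ℝ V < finrank ℝ W + S.ncard → (∀ j ∈ S, r x j = b j) →
        ∃ m, ℓ x ∈ P m := by
  let ι := {S : Set J // finrank ℝ V < finrank ℝ W + S.ncard}
  let restrict (S : ι) : (J → ℝ) →ₗ[ℝ] (S.1 → ℝ) := LinearMap.funLeft ℝ ℝ Subtype.val
  choose G hopen hdense hP using fun S : ι =>
    exists_isOpen_dense_fibre_image_subset ℓ (restrict S ∘ₗ r)
      (by rw [finrank_set_fun_eq_ncard]; exact S.2)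
  have hcont (S : ι) : Continuous (restrict S) := LinearMap.continuous_of_finiteDimensional _
  have hopenMap (S : ι) : IsOpenMap (restrict S) :=
    (restrict S).isOpenMap_of_finiteDimensional
      (LinearMap.funLeft_surjective_of_injective _ _ _ Subtype.val_injective)
  refine ⟨⋂ S, restrict S ⁻¹' G S, dense_iInter_of_isOpen
    (fun S => (hopen S).preimage (hcont S)) fun S => (hdense S).preimage (hopenMap S), ?_⟩
  intro b hb
  choose P hdir hmem using fun S => hP S _ (Set.mem_iInter.1 hb S)
  obtain ⟨k, ⟨e⟩⟩ := Finite.exists_equiv_fin ι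
  refine ⟨k, P ∘ e.symm, fun m => hdir _, fun S x hS hx => ⟨e ⟨S, hS⟩, ?_⟩⟩
  rw [Function.comp_apply, e.symm_apply_apply]
  exact hmem _ x (funext fun j => hx j j.2)

end GenericFibre

section StrictMinimizer

variable {V W J : Type*} [AddCommGroup V] [Module ℝ V] [AddCommGroup W] [Module ℝ W]

/-- `x` is the only minimizer of the linear cost `c` over the polyhedron
`{x' | ℓ x' = ℓ x, r x' ≤ b}`. -/
structure IsStrictMinimizer (ℓ : V →ₗ[ℝ] W) (r : V →ₗ[ℝ] J → ℝ) (b : J → ℝ) (c : V →ₗ[ℝ] ℝ)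
    (x : V) : Prop where
  feasible : r x ≤ b
  eq_of_le : ∀ x', ℓ x' = ℓ x → r x' ≤ b → c x' ≤ c x → x' = x

variable {ℓ : V →ₗ[ℝ] W} {r : V →ₗ[ℝ] J → ℝ} {b : J → ℝ} {c : V →ₗ[ℝ] ℝ} {x d : V}

lemma eventually_apply_add_smul_le [Finite J] (hx : r x ≤ b)
    (hd : ∀ j, r x j = b j → r d j = 0) : ∀ᶠ t : ℝ in 𝓝 0, r (x + t • d) ≤ b := by
  simp only [Pi.le_def, map_add, map_smul, Pi.add_apply, Pi.smul_apply, smul_eq_mul]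
  refine eventually_all.2 fun j => ?_
  obtain hbind | hslack := (hx j).eq_or_lt
  · simp [hd j hbind, hx j]
  · have hcont : Continuous fun t : ℝ => r x j + t * r d j := by fun_prop
    filter_upwards [hcont.tendsto 0 |>.eventually_lt_const (by simpa using hslack)] with t ht
    exact ht.le

lemma IsStrictMinimizer.eq_zero_of_ker [Finite J] (h : IsStrictMinimizer ℓ r b c x)
    (hℓ : ℓ d = 0) (hr : ∀ j, r x j = b j → r d j = 0) : d = 0 := by
  wlog hc : c d ≤ 0 generalizing d
  · refine neg_eq_zero.1 (this (d := -d) (by simp [hℓ]) (fun j hj => by simp [hr j hj]) ?_)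
    simpa using (not_le.1 hc).le
  obtain ⟨t, hfeas, ht⟩ : ∃ t : ℝ, r (x + t • d) ≤ b ∧ 0 < t :=
    ((eventually_apply_add_smul_le h.feasible hr).filter_mono nhdsWithin_le_nhds |>.and
      self_mem_nhdsWithin).exists (f := 𝓝[>] 0)
  have hcost : c (x + t • d) ≤ c x := by
    simpa using mul_nonpos_of_nonneg_of_nonpos ht.le hc
  have hmove := h.eq_of_le (x + t • d) (by simp [hℓ]) hfeas hcost
  exact (smul_eq_zero.1 (left_eq_add.1 hmove.symm)).resolve_left ht.ne'

lemma IsStrictMinimizer.finrank_le [Finite J] [FiniteDimensional ℝ W]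
    (h : IsStrictMinimizer ℓ r b c x) :
    finrank ℝ V ≤ finrank ℝ W + {j | r x j = b j}.ncard := by
  let S : Set J := {j | r x j = b j}
  let T : V →ₗ[ℝ] W × (S → ℝ) := ℓ.prod (LinearMap.funLeft ℝ ℝ Subtype.val ∘ₗ r)
  have hT : Function.Injective T := by
    refine (injective_iff_map_eq_zero T).2 fun d hd => ?_
    obtain ⟨hℓ, hr⟩ := Prod.mk_eq_zero.1 hd
    exact h.eq_zero_of_ker hℓ fun j hj => congrFun hr ⟨j, hj⟩
  have := LinearMap.finrank_le_finrank_of_injective hT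
  rwa [Module.finrank_prod, finrank_set_fun_eq_ncard] at this

theorem exists_dense_forall_isStrictMinimizer_ncard_eq [Finite J] [FiniteDimensional ℝ V]
    [FiniteDimensional ℝ W] [Nontrivial W] (ℓ : V →ₗ[ℝ] W) (r : V →ₗ[ℝ] J → ℝ) :
    ∃ G : Set (J → ℝ), Dense G ∧ ∀ b ∈ G, ∃ (k : ℕ) (P : Fin k → AffineSubspace ℝ W),
      (∀ m, (P m).direction ≠ ⊤) ∧ ∀ c x, IsStrictMinimizer ℓ r b c x → (∀ m, ℓ x ∉ P m) →
        finrank ℝ W + {j | r x j = b j}.ncard = finrank ℝ V := by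
  obtain ⟨G, hG, hcover⟩ := exists_dense_forall_subset_mem_affineSubspace ℓ r
  refine ⟨G, hG, fun b hb => ?_⟩
  obtain ⟨k, P, hP, hmem⟩ := hcover b hb
  refine ⟨k, P, hP, fun c x hx hout => le_antisymm ?_ hx.finrank_le⟩
  by_contra! hmany
  obtain ⟨m, hm⟩ := hmem _ x hmany fun j hj => hj
  exact hout m hm

end StrictMinimizer

section Laplacian

variable {ι ε : Type*} [Fintype ι] [Fintype ε] {C : Matrix ι ε ℝ} {B : Matrix ε ε ℝ}

lemma PosDiag.posDef {E : ℕ} {B : Matrix (Fin E) (Fin E) ℝ} (hB : PosDiag B) : B.PosDef := by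
  have hdiag : B = diagonal B.diag := by
    ext e e'
    obtain rfl | hne := eq_or_ne e e'
    · simp
    · rw [hB.2 e e' hne, diagonal_apply_ne _ hne]
  rw [hdiag]
  exact posDef_diagonal_iff.2 hB.1

lemma transpose_mulVec_eq_zero_of_laplacian_mulVec_eq_zero (hB : B.PosDef) {x : ι → ℝ}
    (hx : (C * B * Cᵀ) *ᵥ x = 0) : Cᵀ *ᵥ x = 0 := by
  by_contra hne
  have henergy : (Cᵀ *ᵥ x) ⬝ᵥ (B *ᵥ (Cᵀ *ᵥ x)) = x ⬝ᵥ ((C * B * Cᵀ) *ᵥ x) := by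
    rw [mulVec_transpose, ← dotProduct_mulVec, mulVec_mulVec, ← mulVec_transpose, mulVec_mulVec]
  have hpos := hB.dotProduct_mulVec_pos hne
  rw [star_trivial, henergy, hx, dotProduct_zero] at hpos
  exact hpos.false

lemma exists_laplacian_mulVec_eq [Nonempty ι] (hB : B.PosDef)
    (hC : ∀ x, Cᵀ *ᵥ x = 0 ↔ ∃ c : ℝ, x = fun _ => c) {v : ι → ℝ} (hv : ∑ i, v i = 0) :
    ∃ x, (C * B * Cᵀ) *ᵥ x = v := by
  classical
  let L : (ι → ℝ) →ₗ[ℝ] (ι → ℝ) := (C * B * Cᵀ).mulVecLin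
  let total : (ι → ℝ) →ₗ[ℝ] ℝ := dotProductBilin ℝ ℝ 1
  have hconst : Cᵀ *ᵥ 1 = 0 := (hC 1).2 ⟨1, rfl⟩
  have hrange : LinearMap.range L ≤ LinearMap.ker total := by
    rintro _ ⟨x, rfl⟩
    change 1 ⬝ᵥ ((C * B * Cᵀ) *ᵥ x) = 0
    rw [Matrix.mul_assoc, ← mulVec_mulVec, dotProduct_mulVec, ← mulVec_transpose, hconst,
      zero_dotProduct]
  have hker : LinearMap.ker L = Submodule.span ℝ {1} := by
    ext x
    rw [LinearMap.mem_ker, Submodule.mem_span_singleton]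
    constructor
    · intro hx
      obtain ⟨c, rfl⟩ := (hC x).1 (transpose_mulVec_eq_zero_of_laplacian_mulVec_eq_zero hB hx)
      exact ⟨c, funext fun _ => mul_one c⟩
    · rintro ⟨c, rfl⟩
      rw [map_smul, mulVecLin_apply, ← mulVec_mulVec, hconst, mulVec_zero, smul_zero]
  have htotal : total ≠ 0 := fun h => by simpa [total] using LinearMap.congr_fun h 1
  have hdim : finrank ℝ (LinearMap.range L) = finrank ℝ (LinearMap.ker total) := by
    have hL := L.finrank_range_add_finrank_ker
    rw [hker, finrank_span_singleton one_ne_zero,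
      ← Module.Dual.finrank_ker_add_one_of_ne_zero htotal] at hL
    exact Nat.add_right_cancel hL
  have hmem : v ∈ LinearMap.range L := by
    rw [Submodule.eq_of_le_of_finrank_eq hrange hdim]
    simpa [total, one_dotProduct] using hv
  exact hmem

end Laplacian

section GroundedAngles

/-- The vectors of angles satisfying the reference condition `θ₁ = 0`. -/
def groundedAngles {n : ℕ} (hn : 0 < n) : Submodule ℝ (Fin n → ℝ) :=
  LinearMap.ker (LinearMap.proj ⟨0, hn⟩)

lemma mem_groundedAngles {n : ℕ} (hn : 0 < n) {θ : Fin n → ℝ} :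
    θ ∈ groundedAngles hn ↔ θ ⟨0, hn⟩ = 0 := Iff.rfl

lemma finrank_groundedAngles_add_one {n : ℕ} (hn : 0 < n) :
    finrank ℝ (groundedAngles hn) + 1 = n := by
  have hproj : (LinearMap.proj ⟨0, hn⟩ : (Fin n → ℝ) →ₗ[ℝ] ℝ) ≠ 0 := fun h => by
    simpa using LinearMap.congr_fun h 1
  exact (Module.Dual.finrank_ker_add_one_of_ne_zero hproj).trans (Module.finrank_fin_fun ℝ)

end GroundedAngles

section Constraints

variable {NG NL E : ℕ} (C : Matrix (Fin (NG + NL)) (Fin E) ℝ) (B : Matrix (Fin E) (Fin E) ℝ)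

/-- The generations `s^g` determined by the angles through the power balance. -/
def generation : (Fin (NG + NL) → ℝ) →ₗ[ℝ] (Fin NG → ℝ) :=
  LinearMap.funLeft ℝ ℝ (Fin.castAdd NL) ∘ₗ (C * B * Cᵀ).mulVecLin

/-- The loads `s^l` determined by the angles through the power balance; they are consumptions,
hence the sign. -/
def load : (Fin (NG + NL) → ℝ) →ₗ[ℝ] (Fin NL → ℝ) :=
  -(LinearMap.funLeft ℝ ℝ (Fin.natAdd NG) ∘ₗ (C * B * Cᵀ).mulVecLin)

/-- The branch flows `B Cᵀ θ`. -/
def branchFlow : (Fin (NG + NL) → ℝ) →ₗ[ℝ] (Fin E → ℝ) := (B * Cᵀ).mulVecLin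

/-- The limits `(s̄, -s̲, p̄, -p̲)`, indexed as in `BindingIdx`: the signs turn every constraint
into an upper bound. -/
def signedLimits : XiT NG E →ₗ[ℝ] (Fin NG ⊕ Fin NG ⊕ Fin E ⊕ Fin E → ℝ) where
  toFun ξ := Sum.elim ξ.1 (Sum.elim (-ξ.2.1) (Sum.elim ξ.2.2.1 (-ξ.2.2.2)))
  map_add' _ _ := by ext (i | i | e | e) <;> simp [add_comm]
  map_smul' _ _ := by ext (i | i | e | e) <;> simp

/-- The left-hand sides of the inequality constraints: they read
`constraintMap C B θ ≤ signedLimits ξ`. -/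
def constraintMap : (Fin (NG + NL) → ℝ) →ₗ[ℝ] (Fin NG ⊕ Fin NG ⊕ Fin E ⊕ Fin E → ℝ) :=
  signedLimits ∘ₗ (generation C B).prod
    ((generation C B).prod ((branchFlow C B).prod (branchFlow C B)))

lemma signedLimits_surjective : Function.Surjective (signedLimits (NG := NG) (E := E)) := by
  intro b
  refine ⟨(fun i => b (.inl i), fun i => -b (.inr (.inl i)), fun e => b (.inr (.inr (.inl e))),
    fun e => -b (.inr (.inr (.inr e)))), ?_⟩
  ext (i | i | e | e) <;> simp [signedLimits]

variable (θ : Fin (NG + NL) → ℝ)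

lemma generation_apply (i : Fin NG) :
    generation C B θ i = ((C * B * Cᵀ) *ᵥ θ) (Fin.castAdd NL i) := rfl

lemma load_apply (k : Fin NL) : load C B θ k = -((C * B * Cᵀ) *ᵥ θ) (Fin.natAdd NG k) := rfl

variable {C B θ} {ξ : XiT NG E} {sl : Fin NL → ℝ} {sg : Fin NG → ℝ}

lemma constraintMap_le_signedLimits_iff : constraintMap C B θ ≤ signedLimits ξ ↔
    (∀ i, ξ.2.1 i ≤ generation C B θ i ∧ generation C B θ i ≤ ξ.1 i) ∧
    ∀ e, ξ.2.2.2 e ≤ branchFlow C B θ e ∧ branchFlow C B θ e ≤ ξ.2.2.1 e := by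
  simp only [constraintMap, signedLimits, LinearMap.coe_comp, LinearMap.coe_mk, AddHom.coe_mk,
    Function.comp_apply, LinearMap.prod_apply, Function.prod_apply, Pi.le_def, Sum.forall,
    Sum.elim_inl, Sum.elim_inr, Pi.neg_apply, neg_le_neg_iff, forall_and]
  tauto

lemma laplacian_mulVec_eq_append_iff : (C * B * Cᵀ) *ᵥ θ = Fin.append sg (fun j => -(sl j)) ↔
    generation C B θ = sg ∧ load C B θ = sl := by
  constructor
  · intro h
    constructor <;> ext k
    · rw [generation_apply, h, Fin.append_left]
    · rw [load_apply, h, Fin.append_right, neg_neg]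
  · rintro ⟨rfl, rfl⟩
    ext i
    refine Fin.addCases (fun i => ?_) (fun k => ?_) i
    · rw [Fin.append_left, generation_apply]
    · rw [Fin.append_right, load_apply, neg_neg]

lemma feasible_iff (hn : 0 < NG + NL) : Feasible C B ξ sl sg θ ↔ θ ∈ groundedAngles hn ∧
    generation C B θ = sg ∧ load C B θ = sl ∧ constraintMap C B θ ≤ signedLimits ξ := by
  rw [Feasible, laplacian_mulVec_eq_append_iff, constraintMap_le_signedLimits_iff,
    mem_groundedAngles, forall_prop_of_true hn, and_assoc]
  exact and_congr_right fun _ => and_congr_right fun hsg => hsg ▸ Iff.rfl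

lemma bindingCount_generation : bindingCount C B ξ (generation C B θ) θ =
    {j | constraintMap C B θ j = signedLimits ξ j}.ncard := by
  classical
  simp only [bindingCount, Set.ncard_eq_toFinset_card', Set.toFinset_ofPred, Finset.card_filter,
    Fintype.sum_sum_type]
  simp only [constraintMap, signedLimits, LinearMap.coe_comp, LinearMap.coe_mk, AddHom.coe_mk,
    Function.comp_apply, LinearMap.prod_apply, Function.prod_apply, Sum.elim_inl, Sum.elim_inr,
    Pi.neg_apply, neg_inj, add_assoc]
  rfl

end Constraints

section AdmissibleLimits

lemma eventually_forall_lt {X ι : Type*} [TopologicalSpace X] [Finite ι] {u v : X → ι → ℝ} {x₀ : X}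
    (hu : ContinuousAt u x₀) (hv : ContinuousAt v x₀) (hlt : ∀ i, u x₀ i < v x₀ i) :
    ∀ᶠ x in 𝓝 x₀, ∀ i, u x i < v x i :=
  eventually_all.2 fun i =>
    (continuousAt_pi.1 hu i).eventually_lt (continuousAt_pi.1 hv i) (hlt i)

variable {NG NL E : ℕ} {C : Matrix (Fin (NG + NL)) (Fin E) ℝ} {B : Matrix (Fin E) (Fin E) ℝ}

lemma mem_omegaXi_iff (hn : 0 < NG + NL) {ξ : XiT NG E} : ξ ∈ OmegaXi C B ↔
    (∀ i, 0 ≤ ξ.2.1 i) ∧ (∀ i, ξ.2.1 i < ξ.1 i) ∧ (∀ e, ξ.2.2.2 e < ξ.2.2.1 e) ∧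
      ∃ θ ∈ groundedAngles hn, (∀ k, 0 < load C B θ k) ∧ constraintMap C B θ ≤ signedLimits ξ := by
  simp only [OmegaXi, Set.mem_ofPred_eq, feasible_iff hn]
  refine and_congr_right fun _ => and_congr_right fun _ => and_congr_right fun _ => ⟨?_, ?_⟩
  · rintro ⟨sl, hsl, sg, θ, hθ, -, rfl, hle⟩
    exact ⟨θ, hθ, hsl, hle⟩
  · rintro ⟨θ, hθ, hload, hle⟩
    exact ⟨_, hload, _, θ, hθ, rfl, rfl, hle⟩

lemma convex_omegaXi (hn : 0 < NG + NL) : Convex ℝ (OmegaXi C B) := by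
  intro ξ hξ ξ' hξ' a b ha hb hab
  obtain ⟨hnonneg, hgen, hflow, θ, hθ, hload, hle⟩ := (mem_omegaXi_iff hn).1 hξ
  obtain ⟨hnonneg', hgen', hflow', θ', hθ', hload', hle'⟩ := (mem_omegaXi_iff hn).1 hξ'
  have hlt {x y x' y' : ℝ} (h : x < y) (h' : x' < y') : a * x + b * x' < a * y + b * y' := by
    have hpos : a * (y - x) + b * (y' - x') ∈ Set.Ioi (0 : ℝ) :=
      convex_Ioi 0 (sub_pos.2 h) (sub_pos.2 h') ha hb hab
    linarith [Set.mem_Ioi.1 hpos]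
  refine (mem_omegaXi_iff hn).2 ⟨fun i => ?_, fun i => hlt (hgen i) (hgen' i),
    fun e => hlt (hflow e) (hflow' e), a • θ + b • θ', ?_, fun k => ?_, ?_⟩
  · exact add_nonneg (mul_nonneg ha (hnonneg i)) (mul_nonneg hb (hnonneg' i))
  · exact add_mem (Submodule.smul_mem _ a hθ) (Submodule.smul_mem _ b hθ')
  · rw [map_add, map_smul, map_smul]
    exact convex_Ioi (0 : ℝ) (Set.mem_Ioi.2 (hload k)) (Set.mem_Ioi.2 (hload' k)) ha hb hab
  · simp only [map_add, map_smul]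
    gcongr

lemma exists_grounded_pos_generation_pos_load (hNG : 0 < NG) (hNL : 0 < NL)
    (hn : 0 < NG + NL) (hConn : ConnectedIncidence C) (hB : B.PosDef) :
    ∃ θ ∈ groundedAngles hn, (∀ i, 0 < generation C B θ i) ∧ ∀ k, 0 < load C B θ k := by
  have : Nonempty (Fin (NG + NL)) := ⟨⟨0, hn⟩⟩
  let supply : Fin NG → ℝ := fun _ => NL
  let demand : Fin NL → ℝ := fun _ => NG
  have hbalance : ∑ i, Fin.append supply (fun k => -demand k) i = 0 := by
    simp [Fin.sum_univ_add, supply, demand, mul_comm]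
  obtain ⟨x, hx⟩ := exists_laplacian_mulVec_eq hB hConn hbalance
  let θ : Fin (NG + NL) → ℝ := x - fun _ => x ⟨0, hn⟩
  have hθ : (C * B * Cᵀ) *ᵥ θ = Fin.append supply (fun k => -demand k) := by
    rw [mulVec_sub, ← mulVec_mulVec (fun _ => x ⟨0, hn⟩), (hConn _).2 ⟨_, rfl⟩, mulVec_zero,
      sub_zero, hx]
  obtain ⟨hgen, hload⟩ := laplacian_mulVec_eq_append_iff.1 hθ
  refine ⟨θ, (mem_groundedAngles hn).2 (sub_self _), fun i => ?_, fun k => ?_⟩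
  · simpa [hgen, supply] using hNL
  · simpa [hload, demand] using hNG

lemma mem_omegaXi_of_forall_lt (hn : 0 < NG + NL) {θ : Fin (NG + NL) → ℝ}
    (hθ : θ ∈ groundedAngles hn) (hload : ∀ k, 0 < load C B θ k) {ξ : XiT NG E}
    (hpos : ∀ i, 0 < ξ.2.1 i) (hgenl : ∀ i, ξ.2.1 i < generation C B θ i)
    (hgenu : ∀ i, generation C B θ i < ξ.1 i) (hflowl : ∀ e, ξ.2.2.2 e < branchFlow C B θ e)
    (hflowu : ∀ e, branchFlow C B θ e < ξ.2.2.1 e) : ξ ∈ OmegaXi C B :=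
  (mem_omegaXi_iff hn).2 ⟨fun i => (hpos i).le, fun i => (hgenl i).trans (hgenu i),
    fun e => (hflowl e).trans (hflowu e), θ, hθ, hload, constraintMap_le_signedLimits_iff.2
      ⟨fun i => ⟨(hgenl i).le, (hgenu i).le⟩, fun e => ⟨(hflowl e).le, (hflowu e).le⟩⟩⟩

lemma interior_omegaXi_nonempty (hNG : 0 < NG) (hNL : 0 < NL) (hConn : ConnectedIncidence C)
    (hB : B.PosDef) : (interior (OmegaXi C B)).Nonempty := by
  have hn : 0 < NG + NL := by omega
  obtain ⟨θ, hθ, hgen, hload⟩ := exists_grounded_pos_generation_pos_load hNG hNL hn hConn hB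
  let g := generation C B θ
  let p := branchFlow C B θ
  let ξ₀ : XiT NG E := (g + 1, (2⁻¹ : ℝ) • g, p + 1, p - 1)
  have hpos : ∀ᶠ ξ : XiT NG E in 𝓝 ξ₀, ∀ i, 0 < ξ.2.1 i :=
    eventually_forall_lt (u := 0) (by fun_prop) (by fun_prop) fun i =>
      mul_pos (by norm_num) (hgen i)
  have hgenl : ∀ᶠ ξ : XiT NG E in 𝓝 ξ₀, ∀ i, ξ.2.1 i < g i :=
    eventually_forall_lt (by fun_prop) (by fun_prop) fun i =>
      mul_lt_of_lt_one_left (hgen i) (by norm_num)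
  have hgenu : ∀ᶠ ξ : XiT NG E in 𝓝 ξ₀, ∀ i, g i < ξ.1 i :=
    eventually_forall_lt (by fun_prop) (by fun_prop) fun i => lt_add_one (g i)
  have hflowl : ∀ᶠ ξ : XiT NG E in 𝓝 ξ₀, ∀ e, ξ.2.2.2 e < p e :=
    eventually_forall_lt (by fun_prop) (by fun_prop) fun e => sub_one_lt (p e)
  have hflowu : ∀ᶠ ξ : XiT NG E in 𝓝 ξ₀, ∀ e, p e < ξ.2.2.1 e :=
    eventually_forall_lt (by fun_prop) (by fun_prop) fun e => lt_add_one (p e)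
  refine ⟨ξ₀, mem_interior_iff_mem_nhds.2 ?_⟩
  filter_upwards [hpos, hgenl, hgenu, hflowl, hflowu] with ξ using
    mem_omegaXi_of_forall_lt hn hθ hload

lemma omegaXi_subset_closure_interior (hNG : 0 < NG) (hNL : 0 < NL)
    (hConn : ConnectedIncidence C) (hB : B.PosDef) :
    OmegaXi C B ⊆ closure (interior (OmegaXi C B)) := by
  rw [(convex_omegaXi (by omega)).closure_interior_eq_closure_of_nonempty_interior
    (interior_omegaXi_nonempty hNG hNL hConn hB)]
  exact subset_closure

end AdmissibleLimits

section Optimum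

variable {NG NL E : ℕ} {C : Matrix (Fin (NG + NL)) (Fin E) ℝ} {B : Matrix (Fin E) (Fin E) ℝ}

lemma IsOptimal.isStrictMinimizer (hn : 0 < NG + NL) {f : Fin NG → ℝ} {ξ : XiT NG E}
    {sl : Fin NL → ℝ} {sg : Fin NG → ℝ} {θ : Fin (NG + NL) → ℝ}
    (hopt : IsOptimal C B f ξ sl sg θ)
    (huniq : ∃! p : (Fin NG → ℝ) × (Fin (NG + NL) → ℝ), IsOptimal C B f ξ sl p.1 p.2)
    (hθ : θ ∈ groundedAngles hn) :
    IsStrictMinimizer ((load C B).domRestrict (groundedAngles hn))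
      ((constraintMap C B).domRestrict (groundedAngles hn)) (signedLimits ξ)
      ((dotProductBilin ℝ ℝ f ∘ₗ generation C B).domRestrict (groundedAngles hn)) ⟨θ, hθ⟩ := by
  obtain ⟨-, rfl, rfl, hle⟩ := (feasible_iff hn).1 hopt.1
  refine ⟨hle, fun x hload hle' hcost => Subtype.ext ?_⟩
  have hopt' : IsOptimal C B f ξ (load C B θ) (generation C B x) x :=
    ⟨(feasible_iff hn).2 ⟨x.2, rfl, hload, hle'⟩, fun sg' θ' h' => hcost.trans (hopt.2 sg' θ' h')⟩
  exact congrArg Prod.snd (huniq.unique (y₁ := (_, _)) (y₂ := (_, _)) hopt' hopt)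

end Optimum

theorem bad_loads_covered_by_affine_subspaces_general {NG NL E : ℕ} (hNG : 0 < NG) (hNL : 0 < NL)
    (C : Matrix (Fin (NG + NL)) (Fin E) ℝ) (B : Matrix (Fin E) (Fin E) ℝ)
    (hConn : ConnectedIncidence C) (hB : B.PosDef) :
    ∃ D ⊆ OmegaXi C B, OmegaXi C B ⊆ closure D ∧
      ∀ ξ ∈ D, ∃ (k : ℕ) (P : Fin k → AffineSubspace ℝ (Fin NL → ℝ)),
        (∀ m, finrank ℝ (P m).direction < NL) ∧
        {sl ∈ OmegaSl C B ξ | ∃ f : Fin NG → ℝ,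
          (∃! p : (Fin NG → ℝ) × (Fin (NG + NL) → ℝ), IsOptimal C B f ξ sl p.1 p.2) ∧
          sl ∉ TOmegaSl C B f ξ} ⊆ ⋃ m, (P m : Set (Fin NL → ℝ)) := by
  have hn : 0 < NG + NL := by omega
  have : Nonempty (Fin NL) := ⟨⟨0, hNL⟩⟩
  obtain ⟨G, hG, hcover⟩ := exists_dense_forall_isStrictMinimizer_ncard_eq
    ((load C B).domRestrict (groundedAngles hn))
    ((constraintMap C B).domRestrict (groundedAngles hn))
  refine ⟨interior (OmegaXi C B) ∩ signedLimits ⁻¹' G,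
    Set.inter_subset_left.trans interior_subset, ?_, fun ξ hξ => ?_⟩
  · have hdense : Dense (signedLimits ⁻¹' G : Set (XiT NG E)) :=
      hG.preimage (signedLimits.isOpenMap_of_finiteDimensional signedLimits_surjective)
    exact (omegaXi_subset_closure_interior hNG hNL hConn hB).trans
      (closure_minimal (hdense.open_subset_closure_inter isOpen_interior) isClosed_closure)
  · obtain ⟨k, P, hP, hcount⟩ := hcover _ hξ.2
    refine ⟨k, P, fun m => ?_, ?_⟩
    · simpa using Submodule.finrank_lt (hP m)
    · rintro sl ⟨hsl, f, huniq, hbad⟩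
      by_contra hout
      refine hbad ⟨hsl, fun sg θ hopt => ?_⟩
      obtain ⟨hθ, rfl, rfl, -⟩ := (feasible_iff hn).1 hopt.1
      have hbinding := hcount _ _ (hopt.isStrictMinimizer hn huniq hθ)
        fun m hm => hout (Set.mem_iUnion.2 ⟨m, hm⟩)
      have hdim := finrank_groundedAngles_add_one hn
      rw [Module.finrank_fin_fun] at hbinding
      simp only [LinearMap.domRestrict_apply] at hbinding
      rw [bindingCount_generation]
      omega

theorem bad_loads_covered_by_affine_subspaces {NG NL E : ℕ} (hNG : 0 < NG) (hNL : 0 < NL) (hE : 0 < E)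
    (C : Matrix (Fin (NG + NL)) (Fin E) ℝ) (B : Matrix (Fin E) (Fin E) ℝ)
    (hInc : IsIncidence C) (hConn : ConnectedIncidence C) (hB : PosDiag B) :
    ∀ f ∈ OmegaF C B, ∃ D ⊆ OmegaXi C B, OmegaXi C B ⊆ closure D ∧
      ∀ ξ ∈ D, ∃ (k : ℕ) (P : Fin k → AffineSubspace ℝ (Fin NL → ℝ)),
        (∀ m, Module.finrank ℝ (P m).direction < NL) ∧
        OmegaSl C B ξ \ TOmegaSl C B f ξ ⊆ ⋃ m, (P m : Set (Fin NL → ℝ)) := by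
  intro f hf
  obtain ⟨D, hD, hdense, hcover⟩ :=
    bad_loads_covered_by_affine_subspaces_general hNG hNL C B hConn hB.posDef
  refine ⟨D, hD, hdense, fun ξ hξ => ?_⟩
  obtain ⟨k, P, hP, hbad⟩ := hcover ξ hξ
  exact ⟨k, P, hP, fun sl hsl => hbad ⟨hsl.1, f, (hf.2 ξ (hD hξ) sl hsl.1).1, hsl.2⟩⟩

end
end

section
/- For every f ∈ Ω_f there exists a subset D ⊆ Ω_ξ, dense in Ω_ξ, such that for every ξ ∈ D and every s^l₀ ∈ ~Ω_sl(ξ, f) the following holds: there is an open set U ⊆ ℝ^{N_L} with s^l₀ ∈ U ⊆ Ω_sl(ξ) such that the set of inequality constraints that are binding at the unique optimal solution is the same for every s^l ∈ U, and the OPF map restricted to U is Fréchet differentiable at s^l₀ (i.e., there is a linear map J : ℝ^{N_L} → ℝ^{N_G} with OPF(s^l) = OPF(s^l₀) + J(s^l − s^l₀) + o(‖s^l − s^l₀‖) as s^l → s^l₀ in U). -/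
open Matrix

noncomputable section

/-!
A unique optimum `x` of a linear program is one at which the cost is strictly positive on all
nonzero feasible directions, a condition that sees `x` only through the set of active constraints.
It forces the active constraints to determine `x`, so if together with the equality constraints
they are as many as the unknowns, they form an invertible linear system. Solving that system for a
perturbed right-hand side moves `x` linearly and, for small perturbations, leaves the inactive
constraints inactive; the feasible directions are then unchanged, and the moved point is again the
unique optimum. For the DC-OPF, `N + 1` equality constraints and `N_G - 1` binding inequality
constraints balance the `N_G + N` unknowns. No limits `ξ` have to be avoided, so the dense set is
all of `Ω_ξ`.
-/

/-- The linear program that minimises `cost x` subject to `eqMap x = b` and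
`ineqMap i x ≤ bound i` for all `i`. The right-hand side `b` is not part of the data: it is the
parameter with respect to which solutions are perturbed. -/
structure LinearProgram (X Y ι : Type*) [AddCommGroup X] [Module ℝ X]
    [AddCommGroup Y] [Module ℝ Y] where
  cost : X →ₗ[ℝ] ℝ
  eqMap : X →ₗ[ℝ] Y
  ineqMap : ι → X →ₗ[ℝ] ℝ
  bound : ι → ℝ

namespace LinearProgram

open Filter
open scoped Topology

variable {X Y ι : Type*} [AddCommGroup X] [Module ℝ X] [AddCommGroup Y] [Module ℝ Y]
  (L : LinearProgram X Y ι) {b : Y} {x y d : X}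

/-- The points satisfying all constraints for the right-hand side `b`. -/
def feasibleSet (b : Y) : Set X :=
  {x | L.eqMap x = b ∧ ∀ i, L.ineqMap i x ≤ L.bound i}

/-- The optimal solutions for the right-hand side `b`. -/
def optimalSet (b : Y) : Set X :=
  {x | x ∈ L.feasibleSet b ∧ ∀ y ∈ L.feasibleSet b, L.cost x ≤ L.cost y}

/-- The indices of the inequality constraints that hold with equality at `x`. -/
def activeSet (x : X) : Set ι :=
  {i | L.ineqMap i x = L.bound i}

/-- The directions in which the constraints active at `x` stay satisfied; for feasible `x` this is
the tangent cone of the feasible polyhedron at `x`. -/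
def feasibleDirections (x : X) : Set X :=
  {d | L.eqMap d = 0 ∧ ∀ i ∈ L.activeSet x, L.ineqMap i d ≤ 0}

/-- The linear part of the system formed by the equality constraints and the inequality
constraints active at `x`. -/
def activeMap (x : X) : X →ₗ[ℝ] Y × (L.activeSet x → ℝ) :=
  L.eqMap.prod (LinearMap.pi fun i => L.ineqMap i)

variable {L}

theorem feasibleDirections_congr (h : L.activeSet x = L.activeSet y) :
    L.feasibleDirections x = L.feasibleDirections y := by
  simp only [feasibleDirections, h]

theorem sub_mem_feasibleDirections (hx : x ∈ L.feasibleSet b) (hy : y ∈ L.feasibleSet b) :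
    y - x ∈ L.feasibleDirections x := by
  refine ⟨by rw [map_sub, hx.1, hy.1, sub_self], fun i hi => ?_⟩
  rw [map_sub, show L.ineqMap i x = L.bound i from hi]
  exact sub_nonpos.2 (hy.2 i)

theorem exists_pos_add_smul_mem_feasibleSet [Finite ι] (hx : x ∈ L.feasibleSet b)
    (hd : d ∈ L.feasibleDirections x) : ∃ t : ℝ, 0 < t ∧ x + t • d ∈ L.feasibleSet b := by
  have hstep : ∀ i, ∀ᶠ t in 𝓝[>] (0 : ℝ), L.ineqMap i (x + t • d) ≤ L.bound i := by
    intro i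
    simp only [map_add, map_smul, smul_eq_mul]
    rcases (hx.2 i).eq_or_lt with hactive | hinactive
    · filter_upwards [self_mem_nhdsWithin] with t ht
      linarith [mul_nonpos_of_nonneg_of_nonpos (le_of_lt ht) (hd.2 i hactive)]
    · have hlim : Tendsto (fun t : ℝ => L.ineqMap i x + t * L.ineqMap i d) (𝓝[>] 0)
          (𝓝 (L.ineqMap i x)) :=
        (Continuous.tendsto' (by fun_prop) 0 _ (by simp)).mono_left nhdsWithin_le_nhds
      exact (hlim.eventually_lt_const hinactive).mono fun _ => le_of_lt
  obtain ⟨t, hineq, ht⟩ := ((eventually_all.2 hstep).and self_mem_nhdsWithin).exists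
  exact ⟨t, ht, by rw [map_add, map_smul, hd.1, hx.1, smul_zero, add_zero], hineq⟩

theorem cost_pos_of_optimalSet_eq_singleton [Finite ι] (h : L.optimalSet b = {x})
    (hd : d ∈ L.feasibleDirections x) (hd0 : d ≠ 0) : 0 < L.cost d := by
  obtain ⟨hx, hunique⟩ := Set.eq_singleton_iff_unique_mem.1 h
  obtain ⟨t, ht, hxd⟩ := exists_pos_add_smul_mem_feasibleSet hx.1 hd
  by_contra! hcost
  have hle : L.cost (x + t • d) ≤ L.cost x := by
    rw [map_add, map_smul]
    exact add_le_of_nonpos_right (smul_nonpos_of_nonneg_of_nonpos ht.le hcost)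
  have heq : x + t • d = x := hunique _ ⟨hxd, fun z hz => hle.trans (hx.2 z hz)⟩
  exact (smul_ne_zero ht.ne' hd0) (add_eq_left.1 heq)

theorem optimalSet_eq_singleton_iff [Finite ι] :
    L.optimalSet b = {x} ↔
      x ∈ L.feasibleSet b ∧ ∀ d ∈ L.feasibleDirections x, d ≠ 0 → 0 < L.cost d := by
  refine ⟨fun h => ⟨(h.ge rfl).1, fun d => cost_pos_of_optimalSet_eq_singleton h⟩, ?_⟩
  rintro ⟨hx, hcost⟩
  have hlt : ∀ y ∈ L.feasibleSet b, y ≠ x → L.cost x < L.cost y := fun y hy hne =>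
    sub_pos.1 (map_sub L.cost y x ▸
      hcost _ (sub_mem_feasibleDirections hx hy) (sub_ne_zero.2 hne))
  refine Set.eq_singleton_iff_unique_mem.2 ⟨⟨hx, fun y hy => ?_⟩, fun y hy => ?_⟩
  · rcases eq_or_ne y x with rfl | hne
    · exact le_rfl
    · exact (hlt y hy hne).le
  · by_contra hne
    exact (hlt y hy.1 hne).not_ge (hy.2 x hx)

theorem activeMap_injective [Finite ι] (h : L.optimalSet b = {x}) :
    Function.Injective (L.activeMap x) := by
  rw [injective_iff_map_eq_zero]
  intro d hd
  have heq : L.eqMap d = 0 := congrArg Prod.fst hd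
  have hineq : ∀ i ∈ L.activeSet x, L.ineqMap i d = 0 := fun i hi =>
    congrFun (congrArg Prod.snd hd) ⟨i, hi⟩
  by_contra hd0
  have hpos : 0 < L.cost d :=
    cost_pos_of_optimalSet_eq_singleton h ⟨heq, fun i hi => (hineq i hi).le⟩ hd0
  have hneg : 0 < L.cost (-d) :=
    cost_pos_of_optimalSet_eq_singleton h
      ⟨by rw [map_neg, heq, neg_zero], fun i hi => by rw [map_neg, hineq i hi, neg_zero]⟩
      (neg_ne_zero.2 hd0)
  rw [map_neg] at hneg
  exact hpos.not_gt (neg_pos.1 hneg)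

theorem exists_activeMap_apply_eq [Finite ι] [FiniteDimensional ℝ Y]
    (hinj : Function.Injective (L.activeMap x))
    (hdim : Module.finrank ℝ Y + (L.activeSet x).ncard = Module.finrank ℝ X) :
    ∃ K : Y →ₗ[ℝ] X, ∀ y, L.activeMap x (K y) = (y, 0) := by
  have := Fintype.ofFinite (L.activeSet x)
  have hfinrank : Module.finrank ℝ X = Module.finrank ℝ (Y × (L.activeSet x → ℝ)) := by
    rw [Module.finrank_prod, Module.finrank_fintype_fun_eq_card, ← hdim,
      ← Nat.card_eq_fintype_card, Nat.card_coe_set_eq]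
  let e := LinearEquiv.ofInjectiveOfFinrankEq (L.activeMap x) hinj hfinrank
  exact ⟨e.symm.toLinearMap ∘ₗ LinearMap.inl ℝ Y _, fun y => e.apply_symm_apply (y, 0)⟩

variable [TopologicalSpace Y] [IsTopologicalAddGroup Y] [ContinuousSMul ℝ Y] [T2Space Y]
  [FiniteDimensional ℝ Y]

theorem eventually_mem_feasibleSet_and_activeSet_eq [Finite ι] (hx : x ∈ L.feasibleSet b)
    {K : Y →ₗ[ℝ] X} (hK : ∀ y, L.activeMap x (K y) = (y, 0)) :
    ∀ᶠ b' in 𝓝 b, x + K (b' - b) ∈ L.feasibleSet b' ∧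
      L.activeSet (x + K (b' - b)) = L.activeSet x := by
  have heq : ∀ y, L.eqMap (K y) = y := fun y => congrArg Prod.fst (hK y)
  have hactive : ∀ b', ∀ i ∈ L.activeSet x, L.ineqMap i (x + K (b' - b)) = L.bound i :=
    fun b' i hi => by
      have hzero : L.ineqMap i (K (b' - b)) = 0 := congrFun (congrArg Prod.snd (hK _)) ⟨i, hi⟩
      rw [map_add, hzero, add_zero, hi]
  have hinactive : ∀ᶠ b' in 𝓝 b, ∀ i ∉ L.activeSet x,
      L.ineqMap i (x + K (b' - b)) < L.bound i := by
    refine eventually_all.2 fun i => eventually_imp_distrib_left.2 fun hi => ?_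
    have hcont : Continuous (L.ineqMap i ∘ₗ K) := LinearMap.continuous_of_finiteDimensional _
    have hlim : Tendsto (fun b' => L.ineqMap i (x + K (b' - b))) (𝓝 b) (𝓝 (L.ineqMap i x)) := by
      simp only [map_add, ← LinearMap.comp_apply (L.ineqMap i) K]
      exact Continuous.tendsto' (by fun_prop) _ _ (by simp)
    exact hlim.eventually_lt_const ((hx.2 i).lt_of_ne hi)
  filter_upwards [hinactive] with b' hb'
  refine ⟨⟨by rw [map_add, heq, hx.1, add_sub_cancel], fun i => ?_⟩, Set.ext fun i => ?_⟩
  · by_cases hi : i ∈ L.activeSet x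
    · exact (hactive b' i hi).le
    · exact (hb' i hi).le
  · exact ⟨not_imp_not.1 fun hi => (hb' i hi).ne, hactive b' i⟩

theorem exists_eventually_optimalSet_eq_singleton [Finite ι] (h : L.optimalSet b = {x})
    (hdim : Module.finrank ℝ Y + (L.activeSet x).ncard = Module.finrank ℝ X) :
    ∃ K : Y →ₗ[ℝ] X, ∀ᶠ b' in 𝓝 b, L.optimalSet b' = {x + K (b' - b)} ∧
      L.activeSet (x + K (b' - b)) = L.activeSet x := by
  obtain ⟨hx, hcost⟩ := optimalSet_eq_singleton_iff.1 h
  obtain ⟨K, hK⟩ := exists_activeMap_apply_eq (activeMap_injective h) hdim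
  refine ⟨K, (eventually_mem_feasibleSet_and_activeSet_eq hx hK).mono ?_⟩
  rintro b' ⟨hfeasible, hactive⟩
  exact ⟨optimalSet_eq_singleton_iff.2
    ⟨hfeasible, feasibleDirections_congr hactive ▸ hcost⟩, hactive⟩

end LinearProgram

theorem ncard_eq_ncard_preimage_inl_add_inr {α β : Type*} [Finite α] [Finite β]
    (s : Set (α ⊕ β)) : s.ncard = (Sum.inl ⁻¹' s).ncard + (Sum.inr ⁻¹' s).ncard := by
  simp only [← Nat.card_coe_set_eq]
  exact (Nat.card_congr Equiv.subtypeSum).trans Nat.card_sum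

section DCOPF

open Filter
open scoped Topology

variable {NG NL E : ℕ} (C : Matrix (Fin (NG + NL)) (Fin E) ℝ) (B : Matrix (Fin E) (Fin E) ℝ)
  (h0 : 0 < NG + NL) (f : Fin NG → ℝ) (ξ : XiT NG E) (sl : Fin NL → ℝ)
  (x : (Fin NG → ℝ) × (Fin (NG + NL) → ℝ))

/-- The DC-OPF as a linear program in `x = (s^g, θ)`. The equality constraints are, in this order,
`θ₁ = 0` and the power balance at the generators and at the loads, with right-hand side
`opfRhs sl`; lower limits are negated to become upper bounds. -/
def opfProgram : LinearProgram ((Fin NG → ℝ) × (Fin (NG + NL) → ℝ))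
    (ℝ × (Fin NG → ℝ) × (Fin NL → ℝ)) (Fin NG ⊕ Fin NG ⊕ Fin E ⊕ Fin E) :=
  let generation : ((Fin NG → ℝ) × (Fin (NG + NL) → ℝ)) →ₗ[ℝ] Fin NG → ℝ := LinearMap.fst ℝ _ _
  let angle : ((Fin NG → ℝ) × (Fin (NG + NL) → ℝ)) →ₗ[ℝ] Fin (NG + NL) → ℝ := LinearMap.snd ℝ _ _
  let injection := (C * B * Cᵀ).mulVecLin ∘ₗ angle
  let flow := (B * Cᵀ).mulVecLin ∘ₗ angle
  { cost := dotProductBilin ℝ ℝ f ∘ₗ generation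
    eqMap := (LinearMap.proj ⟨0, h0⟩ ∘ₗ angle).prod
      ((LinearMap.funLeft ℝ ℝ (Fin.castAdd NL) ∘ₗ injection - generation).prod
        (LinearMap.funLeft ℝ ℝ (Fin.natAdd NG) ∘ₗ injection))
    ineqMap := Sum.elim (fun i => LinearMap.proj i ∘ₗ generation)
      (Sum.elim (fun i => -(LinearMap.proj i ∘ₗ generation))
        (Sum.elim (fun e => LinearMap.proj e ∘ₗ flow) (fun e => -(LinearMap.proj e ∘ₗ flow))))
    bound := Sum.elim ξ.1 (Sum.elim (-ξ.2.1) (Sum.elim ξ.2.2.1 (-ξ.2.2.2))) }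

/-- The right-hand side of the equality constraints of `opfProgram`, as a function of the load. -/
def opfRhs : (Fin NL → ℝ) →L[ℝ] ℝ × (Fin NG → ℝ) × (Fin NL → ℝ) :=
  -(ContinuousLinearMap.inr ℝ ℝ _ ∘L ContinuousLinearMap.inr ℝ (Fin NG → ℝ) (Fin NL → ℝ))

theorem opfProgram_eqMap_eq_iff :
    (opfProgram C B h0 f ξ).eqMap x = opfRhs sl ↔
      (∀ h : 0 < NG + NL, x.2 ⟨0, h⟩ = 0) ∧
        (C * B * Cᵀ) *ᵥ x.2 = Fin.append x.1 (fun j => -(sl j)) := by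
  simp only [opfProgram]
  generalize C * B * Cᵀ = M
  have hbalance : M *ᵥ x.2 = Fin.append x.1 (fun j => -(sl j)) ↔
      (∀ i, (M *ᵥ x.2) (Fin.castAdd NL i) = x.1 i) ∧
        ∀ j, (M *ᵥ x.2) (Fin.natAdd NG j) = -(sl j) := by
    simp only [funext_iff, Fin.forall_fin_add, Fin.append_left, Fin.append_right]
  rw [hbalance]
  simp [opfRhs, h0, Prod.ext_iff, funext_iff, sub_eq_zero, LinearMap.funLeft_apply]

theorem opfProgram_ineqMap_le_iff :
    (∀ c, (opfProgram C B h0 f ξ).ineqMap c x ≤ (opfProgram C B h0 f ξ).bound c) ↔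
      (∀ i, ξ.2.1 i ≤ x.1 i ∧ x.1 i ≤ ξ.1 i) ∧
        ∀ e, ξ.2.2.2 e ≤ ((B * Cᵀ) *ᵥ x.2) e ∧ ((B * Cᵀ) *ᵥ x.2) e ≤ ξ.2.2.1 e := by
  simp only [opfProgram, Sum.forall, Sum.elim_inl, Sum.elim_inr, LinearMap.neg_apply,
    LinearMap.comp_apply, LinearMap.proj_apply, LinearMap.fst_apply, LinearMap.snd_apply,
    mulVecLin_apply, Pi.neg_apply, neg_le_neg_iff, forall_and]
  tauto

theorem mem_feasibleSet_opfProgram :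
    x ∈ (opfProgram C B h0 f ξ).feasibleSet (opfRhs sl) ↔ Feasible C B ξ sl x.1 x.2 := by
  rw [Feasible, ← and_assoc, ← opfProgram_eqMap_eq_iff C B h0 f ξ,
    ← opfProgram_ineqMap_le_iff C B h0 f]
  rfl

theorem mem_optimalSet_opfProgram :
    x ∈ (opfProgram C B h0 f ξ).optimalSet (opfRhs sl) ↔ IsOptimal C B f ξ sl x.1 x.2 := by
  simp only [IsOptimal, ← mem_feasibleSet_opfProgram C B h0 f ξ sl (_, _)]
  exact and_congr_right fun _ => Prod.forall

theorem activeSet_opfProgram :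
    (opfProgram C B h0 f ξ).activeSet x = BindingIdx C B ξ x.1 x.2 := by
  ext (i | i | e | e)
  · rfl
  · exact neg_inj
  · rfl
  · exact neg_inj

theorem ncard_bindingIdx (sg : Fin NG → ℝ) (θ : Fin (NG + NL) → ℝ) :
    (BindingIdx C B ξ sg θ).ncard = bindingCount C B ξ sg θ := by
  simp only [ncard_eq_ncard_preimage_inl_add_inr, bindingCount, add_assoc]
  rfl

variable {C B f ξ sl x}

theorem OPFmap_eq_of_optimalSet_eq_singleton
    (hx : (opfProgram C B h0 f ξ).optimalSet (opfRhs sl) = {x}) :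
    OPFmap C B f ξ sl = x.1 := by
  have hex : ∃ p : (Fin NG → ℝ) × (Fin (NG + NL) → ℝ), IsOptimal C B f ξ sl p.1 p.2 :=
    ⟨x, (mem_optimalSet_opfProgram C B h0 f ξ sl x).1 (hx.ge rfl)⟩
  rw [OPFmap, dif_pos hex, hx.le ((mem_optimalSet_opfProgram C B h0 f ξ sl _).2 hex.choose_spec)]

theorem exists_eventually_optimalSet_opfProgram_eq_singleton (hNG : 0 < NG)
    (hx : (opfProgram C B h0 f ξ).optimalSet (opfRhs sl) = {x})
    (hcount : bindingCount C B ξ x.1 x.2 = NG - 1) :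
    ∃ K : (Fin NL → ℝ) →L[ℝ] (Fin NG → ℝ) × (Fin (NG + NL) → ℝ), ∀ᶠ sl' in 𝓝 sl,
      (opfProgram C B h0 f ξ).optimalSet (opfRhs sl') = {x + K (sl' - sl)} ∧
        BindingIdx C B ξ (x + K (sl' - sl)).1 (x + K (sl' - sl)).2 = BindingIdx C B ξ x.1 x.2 := by
  have hdim : Module.finrank ℝ (ℝ × (Fin NG → ℝ) × (Fin NL → ℝ)) +
      ((opfProgram C B h0 f ξ).activeSet x).ncard =
        Module.finrank ℝ ((Fin NG → ℝ) × (Fin (NG + NL) → ℝ)) := by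
    rw [activeSet_opfProgram, ncard_bindingIdx, hcount]
    simp only [Module.finrank_prod, Module.finrank_self, Module.finrank_fin_fun]
    omega
  obtain ⟨K, hK⟩ := LinearProgram.exists_eventually_optimalSet_eq_singleton hx hdim
  refine ⟨K.toContinuousLinearMap ∘L opfRhs, ?_⟩
  filter_upwards [opfRhs.continuous.continuousAt.eventually hK] with sl' hsl'
  simpa only [← map_sub, activeSet_opfProgram] using! hsl'

theorem opf_locally_differentiable_general (hNG : 0 < NG)
    (huniq : ∃! p : (Fin NG → ℝ) × (Fin (NG + NL) → ℝ), IsOptimal C B f ξ sl p.1 p.2)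
    (hsl : sl ∈ TOmegaSl C B f ξ) :
    ∃ U : Set (Fin NL → ℝ), IsOpen U ∧ sl ∈ U ∧ U ⊆ OmegaSl C B ξ ∧
      (∀ sl' ∈ U, ∃! p : (Fin NG → ℝ) × (Fin (NG + NL) → ℝ), IsOptimal C B f ξ sl' p.1 p.2) ∧
      (∃ S : Set (Fin NG ⊕ Fin NG ⊕ Fin E ⊕ Fin E),
        ∀ sl' ∈ U, ∀ sg θ, IsOptimal C B f ξ sl' sg θ → BindingIdx C B ξ sg θ = S) ∧
      ∃ J : (Fin NL → ℝ) →L[ℝ] (Fin NG → ℝ), HasFDerivAt (OPFmap C B f ξ) J sl := by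
  have h0 : 0 < NG + NL := Nat.add_pos_left hNG NL
  have hmem := mem_optimalSet_opfProgram C B h0 f ξ
  obtain ⟨x, hx, hx_unique⟩ := huniq
  have hopt : (opfProgram C B h0 f ξ).optimalSet (opfRhs sl) = {x} :=
    Set.eq_singleton_iff_unique_mem.2
      ⟨(hmem sl x).2 hx, fun y hy => hx_unique y ((hmem sl y).1 hy)⟩
  obtain ⟨K, hK⟩ :=
    exists_eventually_optimalSet_opfProgram_eq_singleton h0 hNG hopt (hsl.2 _ _ hx)
  have hpos : ∀ᶠ sl' : Fin NL → ℝ in 𝓝 sl, ∀ j, 0 < sl' j := eventually_all.2 fun j =>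
    (continuous_apply j).continuousAt.eventually_const_lt (hsl.1.1 j)
  obtain ⟨U, hU, hU_open, hslU⟩ := eventually_nhds_iff.1 (hK.and hpos)
  have hoptimal : ∀ sl' ∈ U, ∀ y, IsOptimal C B f ξ sl' y.1 y.2 ↔ y = x + K (sl' - sl) :=
    fun sl' hsl' y => by rw [← hmem, (hU sl' hsl').1.1, Set.mem_singleton_iff]
  refine ⟨U, hU_open, hslU,
    fun sl' hsl' => ⟨(hU sl' hsl').2, _, _, ((hoptimal sl' hsl' _).2 rfl).1⟩,
    fun sl' hsl' => ⟨_, (hoptimal sl' hsl' _).2 rfl, fun y => (hoptimal sl' hsl' y).1⟩,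
    ⟨BindingIdx C B ξ x.1 x.2, fun sl' hsl' sg θ hsgθ => ?_⟩,
    .fst ℝ _ _ ∘L K, ?_⟩
  · rw [← (hU sl' hsl').1.2, ← (hoptimal sl' hsl' (sg, θ)).1 hsgθ]
  · have hderiv : HasFDerivAt (fun sl' => (x + K (sl' - sl)).1) (.fst ℝ _ _ ∘L K) sl :=
      ((K.hasFDerivAt.comp sl ((hasFDerivAt_id sl).sub_const sl)).const_add x).fst
    exact hderiv.congr_of_eventuallyEq <| hK.mono fun sl' hsl' =>
      OPFmap_eq_of_optimalSet_eq_singleton h0 hsl'.1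

end DCOPF

theorem opf_locally_differentiable {NG NL E : ℕ} (hNG : 0 < NG) (hNL : 0 < NL) (hE : 0 < E)
    (C : Matrix (Fin (NG + NL)) (Fin E) ℝ) (B : Matrix (Fin E) (Fin E) ℝ)
    (hInc : IsIncidence C) (hConn : ConnectedIncidence C) (hB : PosDiag B) :
    ∀ f ∈ OmegaF C B, ∃ D ⊆ OmegaXi C B, OmegaXi C B ⊆ closure D ∧
      ∀ ξ ∈ D, ∀ sl₀ ∈ TOmegaSl C B f ξ,
        ∃ U : Set (Fin NL → ℝ), IsOpen U ∧ sl₀ ∈ U ∧ U ⊆ OmegaSl C B ξ ∧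
          (∃ S : Set (Fin NG ⊕ Fin NG ⊕ Fin E ⊕ Fin E),
            ∀ sl ∈ U, ∀ sg θ, IsOptimal C B f ξ sl sg θ → BindingIdx C B ξ sg θ = S) ∧
          ∃ J : (Fin NL → ℝ) →L[ℝ] (Fin NG → ℝ),
            HasFDerivWithinAt (OPFmap C B f ξ) J U sl₀ := by
  intro f hf
  refine ⟨OmegaXi C B, subset_rfl, subset_closure, fun ξ hξ sl₀ hsl₀ => ?_⟩
  obtain ⟨U, hU_open, hslU, hU, -, hS, J, hJ⟩ :=
    opf_locally_differentiable_general hNG (hf.2 ξ hξ sl₀ hsl₀.1).1 hsl₀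
  exact ⟨U, hU_open, hslU, hU, hS, J, hJ.hasFDerivWithinAt⟩

end
end
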